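/- Let N ≥ 1 and Λ > 1. Let (u, v) be a classical solution of the system (P_Λ) with u ≥ 0 and v ≥ 0 on ℝ^N, and assume that u(x', x_N) − v(x', x_N) → 1 as x_N → +∞ and u(x', x_N) − v(x', x_N) → −1 as x_N → −∞, uniformly with respect to x' ∈ ℝ^{N−1}. Then (u, v) satisfies condition (h∞), u and v depend only on x_N, and ∂_N u > 0 and ∂_N v < 0 at every point of ℝ^N. -/

import Mathlib

open scoped RealInnerProductSpace
open Filter

noncomputable section

/-- The Laplacian of `f : ℝ^N → ℝ`, as the sum of the pure second partial
derivatives in the coordinate directions. -/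
def lap (N : ℕ) (f : EuclideanSpace ℝ (Fin N) → ℝ) (x : EuclideanSpace ℝ (Fin N)) : ℝ :=
  ∑ i : Fin N,
    fderiv ℝ (fun y => fderiv ℝ f y (EuclideanSpace.single i 1)) x (EuclideanSpace.single i 1)

/-- `(u, v)` is a classical solution of the system `(P_Λ)` on `ℝ^N`:
`u, v` are `C²` and `-Δu = u - u³ - Λ u v²`, `-Δv = v - v³ - Λ u² v` pointwise. -/
def IsSolution (N : ℕ) (Λ : ℝ) (u v : EuclideanSpace ℝ (Fin N) → ℝ) : Prop :=
  ContDiff ℝ 2 u ∧ ContDiff ℝ 2 v ∧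
  (∀ x, -lap N u x = u x - (u x) ^ 3 - Λ * u x * (v x) ^ 2) ∧
  (∀ x, -lap N v x = v x - (v x) ^ 3 - Λ * (u x) ^ 2 * v x)

/-- Condition `(h∞)`: `u → 1`, `v → 0` as `x_N → +∞` and `u → 0`, `v → 1` as
`x_N → -∞`, uniformly with respect to `x' ∈ ℝ^{N-1}` (the dimension is `N + 1`). -/
def Hinf (N : ℕ) (u v : EuclideanSpace ℝ (Fin (N + 1)) → ℝ) : Prop :=
  (∀ ε : ℝ, 0 < ε → ∃ M : ℝ, ∀ x : EuclideanSpace ℝ (Fin (N + 1)),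
    M ≤ x (Fin.last N) → |u x - 1| < ε ∧ |v x| < ε) ∧
  (∀ ε : ℝ, 0 < ε → ∃ M : ℝ, ∀ x : EuclideanSpace ℝ (Fin (N + 1)),
    x (Fin.last N) ≤ M → |u x| < ε ∧ |v x - 1| < ε)

/-!
Since `Δ u ≥ u ^ 3 - u`, the Keller–Osserman estimate gives `u, v ≤ 1`, and then `u - v → ±1`
forces `(h∞)`. As `Λ > 1`, the equilibria `(1, 0)` and `(0, 1)` are linearly stable, so the
inequalities `u x ≤ u (x + τ)`, `v (x + τ) ≤ v x` hold everywhere as soon as they hold on a large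
slab `|⟪e, x⟫| ≤ M`. When `0 < ⟪e, τ⟫`, comparison with Gaussians bounds the increments of an
ordered translation below by a positive constant on slabs, so the set of such `τ` is open as well
as closed in this half space; it contains all `τ` with `⟪e, τ⟫` large, hence is the whole half
space. Letting `⟪e, τ⟫ → 0` gives both inequalities and their converses for `τ` orthogonal to `e`,
which is one-dimensional symmetry, and the strong maximum principle applied to the derivative of
the profile makes the monotonicity strict.
-/

open scoped Topology Laplacian
open Set Metric Module InnerProductSpace

variable {E : Type*} [NormedAddCommGroup E] [InnerProductSpace ℝ E]

/-! ### Calculus for the Laplacian -/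

section Laplacian

variable {f g : E → ℝ} {x : E}

theorem deriv_deriv_comp_line (hf : ContDiffAt ℝ 2 f x) (v : E) :
    deriv (deriv fun t : ℝ => f (x + t • v)) 0 = fderiv ℝ (fderiv ℝ f) x v v := by
  have hline (t : ℝ) : HasDerivAt (fun t : ℝ => x + t • v) v t := by
    simpa using ((hasDerivAt_id t).smul_const v).const_add x
  have htendsto : Tendsto (fun t : ℝ => x + t • v) (𝓝 0) (𝓝 x) := by
    simpa using (hline 0).continuousAt.tendsto
  have hfirst : deriv (fun t : ℝ => f (x + t • v)) =ᶠ[𝓝 0] fun t => fderiv ℝ f (x + t • v) v := by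
    filter_upwards [htendsto.eventually (hf.eventually (by simp))] with t ht
    exact ((ht.differentiableAt two_ne_zero).hasFDerivAt.comp_hasDerivAt t (hline t)).deriv
  have hf' : DifferentiableAt ℝ (fderiv ℝ f) x :=
    (hf.fderiv_right (m := 1) le_rfl).differentiableAt one_ne_zero
  have hsecond : HasDerivAt (fun t : ℝ => fderiv ℝ f (x + t • v)) (fderiv ℝ (fderiv ℝ f) x v) 0 :=
    HasFDerivAt.comp_hasDerivAt 0 (by simpa using hf'.hasFDerivAt) (hline 0)
  rw [hfirst.deriv_eq]
  simpa using (hsecond.clm_apply (hasDerivAt_const 0 v)).deriv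

theorem contDiff_norm_sub_sq {n : WithTop ℕ∞} (c : E) : ContDiff ℝ n fun y : E => ‖y - c‖ ^ 2 :=
  (contDiff_id.sub contDiff_const).norm_sq ℝ

theorem fderiv_norm_sub_sq (c : E) :
    fderiv ℝ (fun y : E => ‖y - c‖ ^ 2) = fun y => 2 • innerSL ℝ (y - c) :=
  funext fun y => ((hasStrictFDerivAt_norm_sq (y - c)).hasFDerivAt.comp y
    ((hasFDerivAt_id y).sub_const c)).fderiv

variable [FiniteDimensional ℝ E]

theorem laplacian_eq_sum_fderiv_fderiv {ι : Type*} [Fintype ι] (f : E → ℝ) (x : E)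
    (b : OrthonormalBasis ι ℝ E) :
    Δ f x = ∑ i, fderiv ℝ (fderiv ℝ f) x (b i) (b i) := by
  simp only [laplacian_eq_iteratedFDeriv_orthonormalBasis f b, iteratedFDeriv_two_apply,
    Matrix.cons_val_zero, Matrix.cons_val_one]

theorem lap_eq_laplacian {N : ℕ} {f : EuclideanSpace ℝ (Fin N) → ℝ} (hf : ContDiff ℝ 2 f) :
    lap N f = Δ f := by
  ext x
  have hf' : DifferentiableAt ℝ (fderiv ℝ f) x :=
    (hf.fderiv_right (m := 1) le_rfl).differentiable one_ne_zero x
  rw [lap, laplacian_eq_sum_fderiv_fderiv f x (EuclideanSpace.basisFun (Fin N) ℝ)]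
  refine Finset.sum_congr rfl fun i _ => ?_
  rw [EuclideanSpace.basisFun_apply, fderiv_clm_apply hf' (differentiableAt_const _)]
  simp

theorem laplacian_comp_add_right (f : E → ℝ) (a x : E) :
    Δ (fun y => f (y + a)) x = Δ f (x + a) := by
  simp only [laplacian_eq_iteratedFDeriv_stdOrthonormalBasis, iteratedFDeriv_comp_add_right]

theorem laplacian_comp_linearIsometryEquiv (hf : ContDiff ℝ 2 f) (L : E ≃ₗᵢ[ℝ] E) (x : E) :
    Δ (fun y => f (L y)) x = Δ f (L x) := by
  have hcomp : iteratedFDeriv ℝ 2 (fun y => f (L y)) x = _ :=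
    (L : E →L[ℝ] E).iteratedFDeriv_comp_right hf x le_rfl
  rw [laplacian_eq_iteratedFDeriv_orthonormalBasis _ (stdOrthonormalBasis ℝ E),
    laplacian_eq_iteratedFDeriv_orthonormalBasis _ ((stdOrthonormalBasis ℝ E).map L)]
  refine Finset.sum_congr rfl fun i _ => ?_
  rw [hcomp]
  simp [iteratedFDeriv_two_apply]

theorem laplacian_comp {φ : ℝ → ℝ} (hφ : ContDiffAt ℝ 2 φ (g x)) (hg : ContDiffAt ℝ 2 g x) :
    Δ (fun y => φ (g y)) x =
      deriv (deriv φ) (g x) * ‖fderiv ℝ g x‖ ^ 2 + deriv φ (g x) * Δ g x := by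
  have hfirst : fderiv ℝ (fun y => φ (g y)) =ᶠ[𝓝 x] fun y => deriv φ (g y) • fderiv ℝ g y := by
    filter_upwards [hg.eventually (by simp), hg.continuousAt.eventually (hφ.eventually (by simp))]
      with y hgy hφy
    exact ((hφy.differentiableAt two_ne_zero).hasDerivAt.comp_hasFDerivAt y
      (hgy.differentiableAt two_ne_zero).hasFDerivAt).fderiv
  have hφ' : DifferentiableAt ℝ (deriv φ) (g x) :=
    (hφ.derivWithin (m := 1) le_rfl).differentiableAt one_ne_zero
  have hg' : DifferentiableAt ℝ (fderiv ℝ g) x :=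
    (hg.fderiv_right (m := 1) le_rfl).differentiableAt one_ne_zero
  have hsecond : fderiv ℝ (fderiv ℝ fun y => φ (g y)) x =
      deriv φ (g x) • fderiv ℝ (fderiv ℝ g) x
        + (deriv (deriv φ) (g x) • fderiv ℝ g x).smulRight (fderiv ℝ g x) :=
    hfirst.fderiv_eq.trans ((hφ'.hasDerivAt.comp_hasFDerivAt x
      (hg.differentiableAt two_ne_zero).hasFDerivAt).smul hg'.hasFDerivAt).fderiv
  let b := stdOrthonormalBasis ℝ E
  rw [laplacian_eq_sum_fderiv_fderiv _ x b, laplacian_eq_sum_fderiv_fderiv g x b, b.norm_dual,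
    Finset.mul_sum, Finset.mul_sum, ← Finset.sum_add_distrib, hsecond]
  refine Finset.sum_congr rfl fun i _ => ?_
  simp only [add_apply, ContinuousLinearMap.smulRight_apply, smul_apply, smul_eq_mul]
  ring

theorem laplacian_norm_sub_sq (c x : E) :
    Δ (fun y : E => ‖y - c‖ ^ 2) x = 2 * finrank ℝ E := by
  have hsecond : HasFDerivAt (fun y : E => 2 • innerSL ℝ (y - c)) (2 • innerSL ℝ) x :=
    (((innerSL ℝ).hasFDerivAt (x := x - c)).comp x ((hasFDerivAt_id x).sub_const c)).const_smul 2
  let b := stdOrthonormalBasis ℝ E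
  rw [laplacian_eq_sum_fderiv_fderiv _ x b, fderiv_norm_sub_sq, hsecond.fderiv]
  calc ∑ i, 2 • ⟪b i, b i⟫ = 2 * finrank ℝ E := by simp [mul_comm]

theorem laplacian_comp_norm_sub_sq {φ : ℝ → ℝ} {c : E} (hφ : ContDiffAt ℝ 2 φ (‖x - c‖ ^ 2)) :
    Δ (fun y => φ (‖y - c‖ ^ 2)) x =
      4 * ‖x - c‖ ^ 2 * deriv (deriv φ) (‖x - c‖ ^ 2)
        + 2 * finrank ℝ E * deriv φ (‖x - c‖ ^ 2) := by
  have hgrad : ‖fderiv ℝ (fun y : E => ‖y - c‖ ^ 2) x‖ = 2 * ‖x - c‖ := by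
    simp only [fderiv_norm_sub_sq, ← Nat.cast_smul_eq_nsmul ℝ, norm_smul, innerSL_apply_norm,
      Nat.cast_ofNat, Real.norm_ofNat]
  rw [laplacian_comp (g := fun y => ‖y - c‖ ^ 2) hφ (contDiff_norm_sub_sq c).contDiffAt,
    laplacian_norm_sub_sq, hgrad]
  ring

theorem laplacian_comp_inner {φ : ℝ → ℝ} {e : E} (hφ : ContDiffAt ℝ 2 φ ⟪e, x⟫) :
    Δ (fun y => φ ⟪e, y⟫) x = ‖e‖ ^ 2 * deriv (deriv φ) ⟪e, x⟫ := by
  have hinner : fderiv ℝ (fun y : E => ⟪e, y⟫) = fun _ => innerSL ℝ e :=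
    funext fun y => (innerSL ℝ e).fderiv
  have hΔ : Δ (fun y : E => ⟪e, y⟫) x = 0 := by
    simp [laplacian_eq_sum_fderiv_fderiv _ x (stdOrthonormalBasis ℝ E), hinner]
  rw [laplacian_comp hφ (innerSL ℝ e).contDiff.contDiffAt, hΔ, hinner, innerSL_apply_norm]
  ring

theorem laplacian_nonpos_of_isLocalMax (hf : ContDiffAt ℝ 2 f x) (hmax : IsLocalMax f x) :
    Δ f x ≤ 0 := by
  rw [laplacian_eq_sum_fderiv_fderiv f x (stdOrthonormalBasis ℝ E)]
  refine Finset.sum_nonpos fun i _ => ?_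
  set v := stdOrthonormalBasis ℝ E i
  by_contra! hpos
  rw [← deriv_deriv_comp_line hf] at hpos
  have hcont : ContinuousAt (fun t : ℝ => x + t • v) 0 := by fun_prop
  have htendsto : Tendsto (fun t : ℝ => x + t • v) (𝓝 0) (𝓝 x) := by
    simpa using hcont.tendsto
  have hmax' : IsLocalMax (fun t : ℝ => f (x + t • v)) 0 := by
    simpa [IsLocalMax, IsMaxFilter] using htendsto.eventually hmax
  have hmin' : IsLocalMin (fun t : ℝ => f (x + t • v)) 0 := by
    refine isLocalMin_of_deriv_deriv_pos hpos hmax'.deriv_eq_zero ?_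
    exact ContinuousAt.comp (by simpa using hf.continuousAt) hcont
  have hconst : (fun t : ℝ => f (x + t • v)) =ᶠ[𝓝 0] fun _ => f x := by
    filter_upwards [hmin', hmax'] with t h₁ h₂
    simpa using le_antisymm h₂ h₁
  rw [hconst.deriv.deriv_eq] at hpos
  simp at hpos

theorem laplacian_le_of_isLocalMax_sub (hf : ContDiffAt ℝ 2 f x) (hg : ContDiffAt ℝ 2 g x)
    (hmax : IsLocalMax (f - g) x) : Δ f x ≤ Δ g x := by
  rw [← sub_nonpos, ← hf.laplacian_sub hg]
  exact laplacian_nonpos_of_isLocalMax (hf.sub hg) hmax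

end Laplacian

/-! ### Maximum principles on unbounded sets -/

section MaximumPrinciple

variable [FiniteDimensional ℝ E] {f : E → ℝ} {S : Set E}

-- Maximize `f - δ ‖· - y‖²` for small `δ`.
theorem exists_ge_laplacian_le (hS : IsClosed S) (hf : ContDiff ℝ 2 f) (hbdd : BddAbove (f '' S))
    {y : E} (hy : y ∈ S) {η : ℝ} (hη : 0 < η) :
    ∃ x ∈ S, f y ≤ f x ∧ (S ∈ 𝓝 x → Δ f x ≤ η) := by
  obtain ⟨B, hB⟩ := hbdd
  set δ : ℝ := η / (2 * finrank ℝ E + 1)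
  have hδ : 0 < δ := by positivity
  have hquad : ContDiff ℝ 2 (δ • fun x : E => ‖x - y‖ ^ 2) :=
    (contDiff_norm_sub_sq y).const_smul δ
  have hcoercive : ∀ᶠ x in cocompact E ⊓ 𝓟 S,
      (f - δ • fun x : E => ‖x - y‖ ^ 2) x ≤ (f - δ • fun x : E => ‖x - y‖ ^ 2) y := by
    have hlarge : ∀ᶠ x in cocompact E, B - f y ≤ δ * dist x y ^ 2 :=
      (((tendsto_pow_atTop two_ne_zero).comp (tendsto_dist_right_cocompact_atTop y)).const_mul_atTop
        hδ).eventually_ge_atTop _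
    filter_upwards [hlarge.filter_mono inf_le_left, mem_inf_of_right (mem_principal_self S)]
      with x hx hxS
    have := hB (mem_image_of_mem f hxS)
    simp only [Pi.sub_apply, Pi.smul_apply, smul_eq_mul, sub_self, norm_zero]
    rw [dist_eq_norm] at hx
    linarith
  obtain ⟨x, hxS, hx⟩ :=
    (hf.sub hquad).continuous.continuousOn.exists_isMaxOn' hS hy hcoercive
  refine ⟨x, hxS, ?_, fun hSx => ?_⟩
  · have hyx : f y - δ * ‖y - y‖ ^ 2 ≤ f x - δ * ‖x - y‖ ^ 2 := hx hy
    have : 0 ≤ δ * ‖x - y‖ ^ 2 := by positivity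
    simp only [sub_self, norm_zero] at hyx
    linarith
  · calc Δ f x ≤ Δ (δ • fun x : E => ‖x - y‖ ^ 2) x :=
          laplacian_le_of_isLocalMax_sub hf.contDiffAt hquad.contDiffAt (hx.isLocalMax hSx)
      _ = δ * (2 * finrank ℝ E) := by
          rw [laplacian_smul _ (contDiff_norm_sub_sq y).contDiffAt,
            laplacian_norm_sub_sq, smul_eq_mul]
      _ ≤ δ * (2 * finrank ℝ E + 1) := by gcongr; linarith
      _ = η := div_mul_cancel₀ _ (by positivity)

theorem le_of_frontier_le (hS : IsClosed S) (hf : ContDiff ℝ 2 f) (hbdd : BddAbove (f '' S))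
    {m κ : ℝ} (hκ : 0 < κ) (hfrontier : ∀ x ∈ frontier S, f x ≤ m)
    (hinterior : ∀ x ∈ interior S, m < f x → κ * (f x - m) ≤ Δ f x) {x : E} (hx : x ∈ S) :
    f x ≤ m := by
  by_contra! hmx
  have hgap : 0 < κ * (f x - m) := mul_pos hκ (sub_pos.2 hmx)
  obtain ⟨y, hyS, hxy, hΔy⟩ := exists_ge_laplacian_le hS hf hbdd hx (half_pos hgap)
  have hmy : m < f y := hmx.trans_le hxy
  have hy : y ∈ interior S := by
    by_contra hy
    exact hmy.not_ge (hfrontier y ⟨subset_closure hyS, hy⟩)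
  have := hinterior y hy hmy
  have := hΔy (mem_interior_iff_mem_nhds.1 hy)
  have : κ * (f x - m) ≤ κ * (f y - m) := by gcongr
  linarith

theorem le_of_laplacian_ge (hf : ContDiff ℝ 2 f) {B m κ : ℝ} (hB : ∀ x, f x ≤ B) (hκ : 0 < κ)
    (h : ∀ x, m < f x → κ * (f x - m) ≤ Δ f x) (x : E) : f x ≤ m :=
  le_of_frontier_le isClosed_univ hf ⟨B, forall_mem_image.2 fun x _ => hB x⟩ hκ (by simp)
    (fun x _ => h x) (mem_univ x)

-- Each function is at most `b / a` times the upper bound for the other one; iterate.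
theorem nonpos_of_coupled_laplacian_ge {W Z : E → ℝ} (hW : ContDiff ℝ 2 W) (hZ : ContDiff ℝ 2 Z)
    {B a b : ℝ} (hWB : ∀ x, W x ≤ B) (hZB : ∀ x, Z x ≤ B) (hb : 0 ≤ b) (hba : b < a)
    (hΔW : ∀ x, 0 < W x → a * W x ≤ Δ W x + b * max (Z x) 0)
    (hΔZ : ∀ x, 0 < Z x → a * Z x ≤ Δ Z x + b * max (W x) 0) (x : E) : W x ≤ 0 ∧ Z x ≤ 0 := by
  have ha : 0 < a := hb.trans_lt hba
  have improve {F G : E → ℝ} (hF : ContDiff ℝ 2 F) {C : ℝ} (hC : 0 ≤ C) (hFC : ∀ x, F x ≤ C)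
      (hGC : ∀ x, G x ≤ C) (hΔF : ∀ x, 0 < F x → a * F x ≤ Δ F x + b * max (G x) 0) (x : E) :
      F x ≤ b / a * C := by
    refine le_of_laplacian_ge hF hFC ha (fun y hy => ?_) x
    have hmul : a * (F y - b / a * C) = a * F y - b * C := by field_simp
    have hpos : 0 < F y := lt_of_le_of_lt (by positivity) hy
    have hmax : b * max (G y) 0 ≤ b * C := by
      gcongr
      exact max_le (hGC y) hC
    linarith [hΔF y hpos]
  have hiter (n : ℕ) : (∀ x, W x ≤ (b / a) ^ n * |B|) ∧ ∀ x, Z x ≤ (b / a) ^ n * |B| := by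
    induction n with
    | zero =>
      simpa using ⟨fun x => (hWB x).trans (le_abs_self B), fun x => (hZB x).trans (le_abs_self B)⟩
    | succ n ih =>
      have hC : 0 ≤ (b / a) ^ n * |B| := by positivity
      rw [pow_succ', mul_assoc]
      exact ⟨improve hW hC ih.1 ih.2 hΔW, improve hZ hC ih.2 ih.1 hΔZ⟩
  have hlim : Tendsto (fun n : ℕ => (b / a) ^ n * |B|) atTop (𝓝 0) := by
    simpa using (tendsto_pow_atTop_nhds_zero_of_lt_one (by positivity)
      ((div_lt_one ha).2 hba)).mul_const |B|
  exact ⟨ge_of_tendsto' hlim fun n => (hiter n).1 x, ge_of_tendsto' hlim fun n => (hiter n).2 x⟩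

end MaximumPrinciple

/-! ### The Keller–Osserman bound -/

section KellerOsserman

variable [FiniteDimensional ℝ E] {f : E → ℝ}

theorem laplacian_div_sq_sub_norm_sub_sq {R : ℝ} {c x : E} (hx : ‖x - c‖ ^ 2 < R ^ 2) (m : ℝ) :
    Δ (fun y => m / (R ^ 2 - ‖y - c‖ ^ 2)) x =
      8 * m * ‖x - c‖ ^ 2 / (R ^ 2 - ‖x - c‖ ^ 2) ^ 3
        + 2 * finrank ℝ E * m / (R ^ 2 - ‖x - c‖ ^ 2) ^ 2 := by
  have hφ (s : ℝ) (hs : s < R ^ 2) :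
      HasDerivAt (fun s => m / (R ^ 2 - s)) (m / (R ^ 2 - s) ^ 2) s := by
    refine ((hasDerivAt_const s m).div ((hasDerivAt_id s).const_sub (R ^ 2))
      (sub_pos.2 hs).ne').congr_deriv ?_
    simp
  have hφ' : HasDerivAt (fun s => m / (R ^ 2 - s) ^ 2)
      (2 * m / (R ^ 2 - ‖x - c‖ ^ 2) ^ 3) (‖x - c‖ ^ 2) := by
    have hne : R ^ 2 - ‖x - c‖ ^ 2 ≠ 0 := (sub_pos.2 hx).ne'
    refine ((hasDerivAt_const (‖x - c‖ ^ 2) m).div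
      (((hasDerivAt_id (‖x - c‖ ^ 2)).const_sub (R ^ 2)).pow 2) (pow_ne_zero 2 hne)).congr_deriv ?_
    simp only [id, Pi.pow_apply]
    field_simp
    ring
  have hderiv : deriv (fun s => m / (R ^ 2 - s)) =ᶠ[𝓝 (‖x - c‖ ^ 2)]
      fun s => m / (R ^ 2 - s) ^ 2 := by
    filter_upwards [eventually_lt_nhds hx] with s hs using (hφ s hs).deriv
  have hsmooth : ContDiffAt ℝ 2 (fun s => m / (R ^ 2 - s)) (‖x - c‖ ^ 2) :=
    contDiffAt_const.div (contDiffAt_const.sub contDiffAt_id) (sub_pos.2 hx).ne'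
  rw [laplacian_comp_norm_sub_sq hsmooth, hderiv.deriv_eq, hφ'.deriv, (hφ _ hx).deriv]
  ring

-- `m` is the maximum of `f * (R² - ‖· - c‖²)`.
theorem exists_isLocalMax_sub_div (hf : Continuous f) (c : E) {R : ℝ} (hR : 0 < R)
    (hfc : 0 < f c) :
    ∃ m x, R ^ 2 * f c ≤ m ∧ ‖x - c‖ ^ 2 < R ^ 2 ∧ f x = m / (R ^ 2 - ‖x - c‖ ^ 2) ∧
      IsLocalMax (f - fun y => m / (R ^ 2 - ‖y - c‖ ^ 2)) x := by
  obtain ⟨x, hxR, hmax⟩ := (isCompact_closedBall c R).exists_isMaxOn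
    (f := fun y => f y * (R ^ 2 - ‖y - c‖ ^ 2)) ⟨c, mem_closedBall_self hR.le⟩ (by fun_prop)
  set m := f x * (R ^ 2 - ‖x - c‖ ^ 2) with hm
  have hcm : R ^ 2 * f c ≤ m := by
    simpa [mul_comm] using hmax (mem_closedBall_self hR.le)
  have hsphere : ‖x - c‖ ^ 2 ≠ R ^ 2 := by
    intro hx
    have : 0 < m := lt_of_lt_of_le (by positivity) hcm
    simp [hm, hx] at this
  have hx : ‖x - c‖ ^ 2 < R ^ 2 := by
    refine lt_of_le_of_ne ?_ hsphere
    gcongr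
    exact mem_closedBall_iff_norm.1 hxR
  have hfx : f x = m / (R ^ 2 - ‖x - c‖ ^ 2) := (mul_div_cancel_right₀ _ (sub_pos.2 hx).ne').symm
  refine ⟨m, x, hcm, hx, hfx, ?_⟩
  have hnear : ∀ᶠ y in 𝓝 x, ‖y - c‖ ^ 2 < R ^ 2 :=
    (contDiff_norm_sub_sq (n := 0) c).continuous.continuousAt.eventually_lt_const hx
  filter_upwards [hnear] with y hy
  have hyR : y ∈ closedBall c R := mem_closedBall_iff_norm.2 (abs_le_of_sq_le_sq' hy.le hR.le).2
  have hfy : f y ≤ m / (R ^ 2 - ‖y - c‖ ^ 2) := (le_div_iff₀ (sub_pos.2 hy)).2 (hmax hyR)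
  simpa [← hfx] using hfy

theorem sq_mul_sq_le_of_cube_sub_le_laplacian (hf : ContDiff ℝ 2 f)
    (hΔ : ∀ x, 0 < f x → f x ^ 3 - f x ≤ Δ f x) {c : E} (hfc : 0 < f c) {R : ℝ} (hR : 0 < R) :
    f c ^ 2 * R ^ 2 ≤ R ^ 2 + (2 * finrank ℝ E + 8) := by
  obtain ⟨m, x, hcm, hx, hfx, hmax⟩ := exists_isLocalMax_sub_div hf.continuous c hR hfc
  set s := ‖x - c‖ ^ 2 with hs
  set d := R ^ 2 - s with hd
  have hdpos : 0 < d := sub_pos.2 hx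
  have hmpos : 0 < m := (mul_pos (pow_pos hR 2) hfc).trans_le hcm
  have hbarrier : ContDiffAt ℝ 2 (fun y => m / (R ^ 2 - ‖y - c‖ ^ 2)) x :=
    contDiffAt_const.div (contDiffAt_const.sub (contDiff_norm_sub_sq c).contDiffAt) hdpos.ne'
  have htouch := (hΔ x (hfx ▸ div_pos hmpos hdpos)).trans
    (laplacian_le_of_isLocalMax_sub hf.contDiffAt hbarrier hmax)
  rw [laplacian_div_sq_sub_norm_sub_sq hx, hfx, ← hs, ← hd] at htouch
  have hmd : m ^ 2 ≤ d ^ 2 + 8 * s + 2 * finrank ℝ E * d := by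
    have : m / d ^ 3 * m ^ 2 ≤ m / d ^ 3 * (d ^ 2 + 8 * s + 2 * finrank ℝ E * d) := by
      calc m / d ^ 3 * m ^ 2 = (m / d) ^ 3 - m / d + m / d := by field_simp; ring
        _ ≤ 8 * m * s / d ^ 3 + 2 * finrank ℝ E * m / d ^ 2 + m / d := by gcongr
        _ = m / d ^ 3 * (d ^ 2 + 8 * s + 2 * finrank ℝ E * d) := by field_simp; ring
    exact le_of_mul_le_mul_left this (by positivity)
  have hs0 : 0 ≤ s := by positivity
  have hdR : d ≤ R ^ 2 := by linarith
  have hmR : (R ^ 2 * f c) ^ 2 ≤ R ^ 2 * (R ^ 2 + (2 * finrank ℝ E + 8)) :=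
    calc (R ^ 2 * f c) ^ 2 ≤ m ^ 2 := by gcongr
      _ ≤ d ^ 2 + 8 * s + 2 * finrank ℝ E * d := hmd
      _ ≤ (R ^ 2) ^ 2 + 8 * R ^ 2 + 2 * finrank ℝ E * R ^ 2 := by gcongr
      _ = R ^ 2 * (R ^ 2 + (2 * finrank ℝ E + 8)) := by ring
  refine le_of_mul_le_mul_left ?_ (pow_pos hR 2)
  linarith

theorem le_one_of_cube_sub_le_laplacian (hf : ContDiff ℝ 2 f)
    (hΔ : ∀ x, 0 < f x → f x ^ 3 - f x ≤ Δ f x) (x : E) : f x ≤ 1 := by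
  by_contra! hx
  have hlim : Tendsto (fun R : ℝ => (f x ^ 2 - 1) * R ^ 2) atTop atTop :=
    (tendsto_pow_atTop two_ne_zero).const_mul_atTop (by nlinarith)
  obtain ⟨R, hlarge, hR⟩ :=
    ((hlim.eventually_gt_atTop (2 * finrank ℝ E + 8)).and (eventually_gt_atTop 0)).exists
  linarith [sq_mul_sq_le_of_cube_sub_le_laplacian hf hΔ (zero_lt_one.trans hx) hR]

end KellerOsserman

/-! ### Lipschitz bounds -/

section Lipschitz

variable [FiniteDimensional ℝ E]

theorem deriv_deriv_linear_sub_quadratic (a b t : ℝ) :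
    deriv (deriv fun t : ℝ => a * t - b * t ^ 2) t = -2 * b := by
  have hfirst : deriv (fun t : ℝ => a * t - b * t ^ 2) = fun t => a - 2 * b * t := by
    ext t
    refine HasDerivAt.deriv ((((hasDerivAt_id t).const_mul a).sub
      ((hasDerivAt_pow 2 t).const_mul b)).congr_deriv ?_)
    push_cast
    ring
  rw [hfirst]
  refine HasDerivAt.deriv ((((hasDerivAt_id t).const_mul (2 * b)).const_sub a).congr_deriv ?_)
  ring

-- The comparison function is `ψ ⟪e, ·⟫`, where `ψ` is concave, `ψ 0 = 0` and `ψ 1 = C`.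
theorem le_mul_inner_of_slab {g : E → ℝ} (hg : ContDiff ℝ 2 g) {A C : ℝ} (hA : 0 ≤ A)
    (hC : 0 ≤ C) (hgC : ∀ x, g x ≤ C) (hΔg : ∀ x, -A ≤ Δ g x) {e : E} (he : ‖e‖ = 1)
    (hzero : ∀ x, ⟪e, x⟫ = 0 → g x ≤ 0) {x : E} (hx : ⟪e, x⟫ ∈ Icc 0 1) :
    g x ≤ (C + A + 1) * ⟪e, x⟫ := by
  set ψ : ℝ → ℝ := fun t => (C + A + 1) * t - (A + 1) * t ^ 2
  have hψ : ContDiff ℝ 2 ψ := by fun_prop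
  have hψ₀ {t : ℝ} (ht : t ∈ Icc (0 : ℝ) 1) : 0 ≤ ψ t := by
    have : ψ t = C * t + (A + 1) * (t * (1 - t)) := by ring
    rw [this]
    exact add_nonneg (mul_nonneg hC ht.1)
      (mul_nonneg (by linarith) (mul_nonneg ht.1 (sub_nonneg.2 ht.2)))
  have hψe : ContDiff ℝ 2 fun y : E => ψ ⟪e, y⟫ := hψ.comp (innerSL ℝ e).contDiff
  have hΔ (y : E) : 1 ≤ Δ (g - fun y : E => ψ ⟪e, y⟫) y := by
    rw [hg.contDiffAt.laplacian_sub hψe.contDiffAt, laplacian_comp_inner hψ.contDiffAt,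
      deriv_deriv_linear_sub_quadratic, he]
    linarith [hΔg y]
  have hle {y : E} (hy : ⟪e, y⟫ ∈ Icc (0 : ℝ) 1) : (g - fun y : E => ψ ⟪e, y⟫) y ≤ C :=
    (sub_le_self _ (hψ₀ hy)).trans (hgC y)
  have hinner : Continuous fun y : E => ⟪e, y⟫ := by fun_prop
  have hfrontier (y : E) (hy : y ∈ frontier ((fun y : E => ⟪e, y⟫) ⁻¹' Icc 0 1)) :
      (g - fun y : E => ψ ⟪e, y⟫) y ≤ 0 := by
    have hy' := hinner.frontier_preimage_subset _ hy
    rw [frontier_Icc zero_le_one] at hy'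
    rcases hy' with hy' | (hy' : ⟪e, y⟫ = 1)
    · simpa [ψ, show ⟪e, y⟫ = 0 from hy'] using hzero y hy'
    · simpa [ψ, hy'] using hgC y
  have hmax := le_of_frontier_le (isClosed_Icc.preimage hinner) (hg.sub hψe)
    ⟨C, forall_mem_image.2 fun y hy => hle hy⟩ (m := 0) (κ := 1 / (C + 1)) (by positivity)
    hfrontier (fun y hy _ => ?_) hx
  · have : 0 ≤ (A + 1) * ⟪e, x⟫ ^ 2 := by positivity
    linarith [show g x - ((C + A + 1) * ⟪e, x⟫ - (A + 1) * ⟪e, x⟫ ^ 2) ≤ 0 from hmax]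
  · refine le_trans ?_ (hΔ y)
    rw [sub_zero, one_div_mul_eq_div, div_le_one (by positivity)]
    exact (hle (mem_preimage.1 (interior_subset hy))).trans (by linarith)

theorem sub_reflection_le_of_laplacian_bounded {f : E → ℝ} (hf : ContDiff ℝ 2 f) {A B : ℝ}
    (hB : ∀ x, |f x| ≤ B) (hA : ∀ x, |Δ f x| ≤ A) {e : E} (he : ‖e‖ = 1) {x : E}
    (hx : ⟪e, x⟫ ∈ Icc 0 1) :
    f x - f ((ℝ ∙ e)ᗮ.reflection x) ≤ (2 * B + 2 * A + 1) * ⟪e, x⟫ := by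
  set L := (ℝ ∙ e)ᗮ.reflection
  have hfL : ContDiff ℝ 2 fun y => f (L y) := hf.comp L.contDiff
  have hA₀ : 0 ≤ A := (abs_nonneg _).trans (hA 0)
  have hB₀ : 0 ≤ B := (abs_nonneg _).trans (hB 0)
  refine le_mul_inner_of_slab (g := f - fun y => f (L y)) (hf.sub hfL) (mul_nonneg two_pos.le hA₀)
    (mul_nonneg two_pos.le hB₀) (fun y => ?_) (fun y => ?_) he (fun y hy => ?_) hx
  · rw [Pi.sub_apply]
    linarith [(abs_le.1 (hB y)).2, (abs_le.1 (hB (L y))).1]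
  · rw [hf.contDiffAt.laplacian_sub hfL.contDiffAt, laplacian_comp_linearIsometryEquiv hf]
    linarith [(abs_le.1 (hA y)).1, (abs_le.1 (hA (L y))).2]
  · have : L y = y := Submodule.reflection_mem_subspace_eq_self
      (Submodule.mem_orthogonal_singleton_iff_inner_right.2 hy)
    simp [this]

theorem sub_le_of_laplacian_bounded {f : E → ℝ} (hf : ContDiff ℝ 2 f) {A B : ℝ}
    (hB : ∀ x, |f x| ≤ B) (hA : ∀ x, |Δ f x| ≤ A) (c z : E) :
    f (z + c) - f (-z + c) ≤ (2 * B + 2 * A + 1) * ‖z‖ := by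
  rcases eq_or_ne z 0 with rfl | hz
  · simp
  rcases le_total ‖z‖ 1 with hz₁ | hz₁
  · set e : E := ‖z‖⁻¹ • z
    have hz₀ : ‖z‖ ≠ 0 := norm_ne_zero_iff.2 hz
    have he : ‖e‖ = 1 := norm_smul_inv_norm hz
    have hez : ⟪e, z⟫ = ‖z‖ := by
      rw [real_inner_smul_left, real_inner_self_eq_norm_sq]
      field_simp
    have hreflect : (ℝ ∙ e)ᗮ.reflection z = -z :=
      Submodule.reflection_mem_subspace_orthogonal_precomplement_eq_neg
        (Submodule.mem_span_singleton.2 ⟨‖z‖, smul_inv_smul₀ hz₀ z⟩)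
    have := sub_reflection_le_of_laplacian_bounded (f := fun y => f (y + c))
      (hf.comp (contDiff_id.add contDiff_const)) (fun y => hB _)
      (fun y => (congrArg abs (laplacian_comp_add_right f c y)).trans_le (hA _))
      he (x := z) ⟨hez.ge.trans' (norm_nonneg z), hez.le.trans hz₁⟩
    rwa [hreflect, hez] at this
  · have hA₀ : 0 ≤ A := (abs_nonneg _).trans (hA 0)
    have hB₀ : 0 ≤ B := (abs_nonneg _).trans (hB 0)
    calc f (z + c) - f (-z + c) ≤ 2 * B := by
          linarith [(abs_le.1 (hB (z + c))).2, (abs_le.1 (hB (-z + c))).1]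
      _ ≤ (2 * B + 2 * A + 1) * 1 := by linarith
      _ ≤ (2 * B + 2 * A + 1) * ‖z‖ := by gcongr

-- Compare `f` with its reflection in the hyperplane midway between the two points.
theorem lipschitzWith_of_laplacian_bounded {f : E → ℝ} (hf : ContDiff ℝ 2 f) {A B : ℝ}
    (hB : ∀ x, |f x| ≤ B) (hA : ∀ x, |Δ f x| ≤ A) :
    LipschitzWith (2 * B + 2 * A + 1).toNNReal f := by
  have hK : 0 ≤ 2 * B + 2 * A + 1 := by
    linarith [(abs_nonneg _).trans (hA 0), (abs_nonneg _).trans (hB 0)]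
  refine LipschitzWith.of_le_add_mul _ fun x y => ?_
  have hxy := sub_le_of_laplacian_bounded hf hB hA ((2 : ℝ)⁻¹ • (x + y)) ((2 : ℝ)⁻¹ • (x - y))
  have hx : (2 : ℝ)⁻¹ • (x - y) + (2 : ℝ)⁻¹ • (x + y) = x := by module
  have hy : -((2 : ℝ)⁻¹ • (x - y)) + (2 : ℝ)⁻¹ • (x + y) = y := by module
  have hnorm : ‖(2 : ℝ)⁻¹ • (x - y)‖ ≤ dist x y := by
    rw [norm_smul, dist_eq_norm, norm_inv, Real.norm_ofNat]
    linarith [norm_nonneg (x - y)]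
  rw [hx, hy] at hxy
  rw [Real.coe_toNNReal _ hK, ← sub_le_iff_le_add']
  exact hxy.trans (by gcongr)

end Lipschitz

/-! ### Gaussian lower bounds -/

section Gaussian

variable [FiniteDimensional ℝ E] {w : E → ℝ} {K r η : ℝ}

theorem laplacian_gaussian (η α : ℝ) (y x : E) :
    Δ (fun x => η * Real.exp (-α * ‖x - y‖ ^ 2)) x =
      (4 * α ^ 2 * ‖x - y‖ ^ 2 - 2 * finrank ℝ E * α) * (η * Real.exp (-α * ‖x - y‖ ^ 2)) := by
  have hφ (C s : ℝ) : HasDerivAt (fun s => C * Real.exp (-α * s)) (-α * C * Real.exp (-α * s)) s :=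
    (((hasDerivAt_id s).const_mul (-α)).exp.const_mul C).congr_deriv (by simp only [id]; ring)
  have hφ' (C : ℝ) : deriv (fun s => C * Real.exp (-α * s)) =
      fun s => -α * C * Real.exp (-α * s) := funext fun s => (hφ C s).deriv
  rw [laplacian_comp_norm_sub_sq (φ := fun s => η * Real.exp (-α * s)) (by fun_prop), hφ', hφ']
  ring

-- The Gaussian is a subsolution of `Δ w = K w` outside the ball.
theorem gaussian_le_of_laplacian_le (hw : ContDiff ℝ 2 w) (hw₀ : ∀ x, 0 ≤ w x) (hK : 0 < K)
    (hΔ : ∀ x, Δ w x ≤ K * w x) {α : ℝ} (hα : 0 ≤ α)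
    (hαK : K ≤ 4 * α ^ 2 * r ^ 2 - 2 * finrank ℝ E * α) (hr : 0 ≤ r) (hη : 0 ≤ η) {y : E}
    (hy : ∀ x ∈ closedBall y r, η ≤ w x) (x : E) : η * Real.exp (-α * ‖x - y‖ ^ 2) ≤ w x := by
  set G : E → ℝ := fun x => η * Real.exp (-α * ‖x - y‖ ^ 2)
  have hG : ContDiff ℝ 2 G :=
    contDiff_const.mul (contDiff_const.mul (contDiff_norm_sub_sq y)).exp
  have hG₀ (x : E) : 0 ≤ G x := by positivity
  have hGη (x : E) : G x ≤ η := by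
    refine mul_le_of_le_one_right hη (Real.exp_le_one_iff.2 ?_)
    rw [neg_mul, neg_nonpos]
    positivity
  by_cases hx : x ∈ closedBall y r
  · exact (hGη x).trans (hy x hx)
  have hfrontier (z : E) (hz : z ∈ frontier (ball y r)ᶜ) : (G - w) z ≤ 0 := by
    rw [frontier_compl] at hz
    exact sub_nonpos.2 ((hGη z).trans (hy z (frontier_ball_subset_sphere.trans
      sphere_subset_closedBall hz)))
  refine sub_nonpos.1 (le_of_frontier_le isOpen_ball.isClosed_compl (hG.sub hw)
    ⟨η, forall_mem_image.2 fun z _ => ?_⟩ hK hfrontier (fun z hz _ => ?_)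
    fun hxb => hx (ball_subset_closedBall hxb))
  · exact (sub_le_self _ (hw₀ z)).trans (hGη z)
  · have hrz : r ^ 2 ≤ ‖z - y‖ ^ 2 := by
      gcongr
      simpa [dist_eq_norm] using interior_subset hz
    have hΔsub : Δ (fun x => G x - w x) z = Δ G z - Δ w z :=
      hG.contDiffAt.laplacian_sub hw.contDiffAt
    have hKG : K * G z ≤ (4 * α ^ 2 * ‖z - y‖ ^ 2 - 2 * finrank ℝ E * α) * G z := by
      refine mul_le_mul_of_nonneg_right (hαK.trans ?_) (hG₀ z)
      gcongr
    rw [hΔsub, laplacian_gaussian]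
    linarith [hΔ z]

theorem exists_gaussian_le (E : Type*) [NormedAddCommGroup E] [InnerProductSpace ℝ E]
    [FiniteDimensional ℝ E] (hK : 0 < K) (hr : 0 < r) :
    ∃ α, 0 ≤ α ∧ ∀ w : E → ℝ, ContDiff ℝ 2 w → (∀ x, 0 ≤ w x) → (∀ x, Δ w x ≤ K * w x) →
      ∀ η y, 0 ≤ η → (∀ x ∈ closedBall y r, η ≤ w x) →
        ∀ x, η * Real.exp (-α * ‖x - y‖ ^ 2) ≤ w x := by
  set n : ℝ := (finrank ℝ E : ℝ)
  set α : ℝ := (K + 2 * n) / (4 * r ^ 2) + 1 with hα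
  have hα₁ : 1 ≤ α := le_add_of_nonneg_left (by positivity)
  have hαr : K + 2 * n ≤ 4 * r ^ 2 * α := by
    rw [hα, mul_add, mul_div_cancel₀ _ (by positivity)]
    linarith [pow_pos hr 2]
  have hαK : K ≤ 4 * α ^ 2 * r ^ 2 - 2 * n * α := by
    calc K ≤ 4 * r ^ 2 * α - 2 * n := by linarith
      _ ≤ α * (4 * r ^ 2 * α - 2 * n) := le_mul_of_one_le_left (by linarith) hα₁
      _ = 4 * α ^ 2 * r ^ 2 - 2 * n * α := by ring
  exact ⟨α, by linarith, fun w hw hw₀ hΔ η y hη hy =>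
    gaussian_le_of_laplacian_le hw hw₀ hK hΔ (by linarith) hαK hr.le hη hy⟩

theorem exists_forall_le_of_uniformContinuous (hw : ContDiff ℝ 2 w) (hw₀ : ∀ x, 0 ≤ w x)
    (hK : 0 < K) (hΔ : ∀ x, Δ w x ≤ K * w x) (huc : UniformContinuous w) (hη : 0 < η) (R : ℝ) :
    ∃ c > 0, ∀ x y, dist x y ≤ R → η ≤ w y → c ≤ w x := by
  obtain ⟨r, hr, hclose⟩ := Metric.uniformContinuous_iff_le.1 huc (η / 2) (half_pos hη)
  obtain ⟨α, hα, hgauss⟩ := exists_gaussian_le E hK hr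
  refine ⟨η / 2 * Real.exp (-α * R ^ 2), by positivity, fun x y hxy hy => ?_⟩
  have hball : ∀ z ∈ closedBall y r, η / 2 ≤ w z := fun z hz => by
    linarith [(abs_le.1 (Real.dist_eq (w z) (w y) ▸ hclose hz)).1]
  refine le_trans ?_ (hgauss w hw hw₀ hΔ (η / 2) y (half_pos hη).le hball x)
  have : ‖x - y‖ ^ 2 ≤ R ^ 2 := by
    gcongr
    rwa [← dist_eq_norm]
  simp only [neg_mul]
  gcongr

theorem pos_of_laplacian_le (hw : ContDiff ℝ 2 w) (hw₀ : ∀ x, 0 ≤ w x) (hK : 0 < K)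
    (hΔ : ∀ x, Δ w x ≤ K * w x) {y : E} (hy : 0 < w y) (x : E) : 0 < w x := by
  obtain ⟨r, hr, hball⟩ := nhds_basis_closedBall.eventually_iff.1
    (hw.continuous.continuousAt.eventually_const_le (half_lt_self hy))
  obtain ⟨α, -, hgauss⟩ := exists_gaussian_le E hK hr
  exact lt_of_lt_of_le (by positivity)
    (hgauss w hw hw₀ hΔ (w y / 2) y (half_pos hy).le (fun z hz => hball hz) x)

end Gaussian

/-! ### The reaction term -/

/-- The right-hand side of the system `(P_Λ)`, which reads `Δ u = reaction Λ u v` and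
`Δ v = reaction Λ v u`. -/
def reaction (Λ a b : ℝ) : ℝ :=
  a ^ 3 - a + Λ * a * b ^ 2

section Reaction

variable {Λ ε a b a' b' : ℝ}

theorem reaction_sub_reaction (Λ a b a' b' : ℝ) :
    reaction Λ a b - reaction Λ a' b' =
      (a ^ 2 + a * a' + a' ^ 2 - 1 + Λ * b' ^ 2) * (a - a') + Λ * a * (b ^ 2 - b' ^ 2) := by
  unfold reaction
  ring

theorem cube_sub_le_reaction (hΛ : 0 ≤ Λ) (ha : 0 ≤ a) : a ^ 3 - a ≤ reaction Λ a b :=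
  le_add_of_nonneg_right (by positivity)

theorem abs_reaction_le (hΛ : 0 ≤ Λ) (ha : a ∈ Icc 0 1) (hb : b ∈ Icc 0 1) :
    |reaction Λ a b| ≤ 1 + Λ := by
  obtain ⟨ha₀, ha₁⟩ := ha
  obtain ⟨hb₀, hb₁⟩ := hb
  have hcube : |a ^ 3 - a| ≤ 1 :=
    abs_sub_le_of_nonneg_of_le (by positivity) (pow_le_one₀ ha₀ ha₁) ha₀ ha₁
  have hcoupling : |Λ * a * b ^ 2| ≤ Λ := by
    rw [abs_of_nonneg (by positivity), mul_assoc]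
    exact mul_le_of_le_one_right hΛ (mul_le_one₀ ha₁ (by positivity) (pow_le_one₀ hb₀ hb₁))
  exact (abs_add_le _ _).trans (add_le_add hcube hcoupling)

theorem reaction_sub_reaction_le (hΛ : 0 ≤ Λ) (ha : 0 ≤ a) (haa : a ≤ a') (ha' : a' ≤ 1)
    (hb' : 0 ≤ b') (hbb : b' ≤ b) (hb : b ≤ 1) :
    reaction Λ a' b' - reaction Λ a b ≤ (2 + Λ) * (a' - a) := by
  have hfactor : a' ^ 2 + a' * a + a ^ 2 - 1 + Λ * b ^ 2 ≤ 2 + Λ := by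
    have : Λ * b ^ 2 ≤ Λ := mul_le_of_le_one_right hΛ (pow_le_one₀ (hb'.trans hbb) hb)
    have : a' * a ≤ 1 := mul_le_one₀ ha' ha (haa.trans ha')
    linarith [pow_le_one₀ (n := 2) (ha.trans haa) ha', pow_le_one₀ (n := 2) ha (haa.trans ha')]
  have hcoupling : Λ * a' * (b' ^ 2 - b ^ 2) ≤ 0 :=
    mul_nonpos_of_nonneg_of_nonpos (mul_nonneg hΛ (ha.trans haa)) (sub_nonpos.2 (by gcongr))
  rw [reaction_sub_reaction]
  linarith [mul_le_mul_of_nonneg_right hfactor (sub_nonneg.2 haa)]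

theorem neg_mul_max_sub_le_sq_sub_sq {β : ℝ} (hb' : 0 ≤ b') (hβ : b' ≤ β) :
    -(2 * β * max (b' - b) 0) ≤ b ^ 2 - b' ^ 2 := by
  rcases le_total b' b with hbb | hbb
  · rw [max_eq_right (sub_nonpos.2 hbb), mul_zero, neg_zero, sub_nonneg]
    gcongr
  · rw [max_eq_left (sub_nonneg.2 hbb)]
    linarith [mul_le_mul_of_nonneg_right (by linarith : b' + b ≤ 2 * β) (sub_nonneg.2 hbb)]

theorem reaction_stable_near_one_zero (hΛ : 0 ≤ Λ) (hε : ε ≤ 1) (ha : a ≤ 1)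
    (hb' : 0 ≤ b') (haa : a' < a) (ha' : 1 - ε ≤ a') (hbε : b' ≤ ε) :
    (3 * (1 - ε) ^ 2 - 1) * (a - a') ≤
      reaction Λ a b - reaction Λ a' b' + 2 * Λ * ε * max (b' - b) 0 := by
  have hε' : 0 ≤ 1 - ε := sub_nonneg.2 hε
  have ha₀ : 0 ≤ a := by linarith
  have hfactor : 3 * (1 - ε) ^ 2 - 1 ≤ a ^ 2 + a * a' + a' ^ 2 - 1 + Λ * b' ^ 2 := by
    have : (1 - ε) * (1 - ε) ≤ a * a' := mul_le_mul (ha'.trans haa.le) ha' hε' ha₀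
    have : (1 - ε) ^ 2 ≤ a ^ 2 := pow_le_pow_left₀ hε' (ha'.trans haa.le) 2
    have : (1 - ε) ^ 2 ≤ a' ^ 2 := pow_le_pow_left₀ hε' ha' 2
    have : 0 ≤ Λ * b' ^ 2 := by positivity
    linarith
  have hcoupling : -(2 * Λ * ε * max (b' - b) 0) ≤ Λ * a * (b ^ 2 - b' ^ 2) := calc
    _ ≤ -(a * (2 * Λ * ε * max (b' - b) 0)) :=
      neg_le_neg (mul_le_of_le_one_left (by have := hb'.trans hbε; positivity) ha)
    _ = Λ * a * -(2 * ε * max (b' - b) 0) := by ring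
    _ ≤ _ := by
      gcongr
      exact neg_mul_max_sub_le_sq_sub_sq hb' hbε
  rw [reaction_sub_reaction]
  linarith [mul_le_mul_of_nonneg_right hfactor (sub_nonneg.2 haa.le)]

theorem reaction_stable_near_zero_one (hΛ : 0 ≤ Λ) (hε : ε ≤ 1) (ha' : 0 ≤ a') (haa : a' < a)
    (haε : a ≤ ε) (hb : 1 - ε ≤ b) (hb' : b' ∈ Icc 0 1) :
    (Λ * (1 - ε) ^ 2 - 1) * (a - a') ≤
      reaction Λ a b - reaction Λ a' b' + 2 * Λ * ε * max (b' - b) 0 := by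
  have hε' : 0 ≤ 1 - ε := sub_nonneg.2 hε
  have hfactor : Λ * (1 - ε) ^ 2 - 1 ≤ a' ^ 2 + a' * a + a ^ 2 - 1 + Λ * b ^ 2 := by
    have : 0 ≤ a' * a := mul_nonneg ha' (ha'.trans haa.le)
    have : Λ * (1 - ε) ^ 2 ≤ Λ * b ^ 2 :=
      mul_le_mul_of_nonneg_left (pow_le_pow_left₀ hε' hb 2) hΛ
    linarith [sq_nonneg a, sq_nonneg a']
  have hcoupling : -(2 * Λ * ε * max (b' - b) 0) ≤ Λ * a' * (b ^ 2 - b' ^ 2) := calc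
    _ = -(ε * (2 * Λ * max (b' - b) 0)) := by ring
    _ ≤ -(a' * (2 * Λ * max (b' - b) 0)) := by gcongr; exact haa.le.trans haε
    _ = Λ * a' * -(2 * 1 * max (b' - b) 0) := by ring
    _ ≤ _ := by
      gcongr
      exact neg_mul_max_sub_le_sq_sub_sq hb'.1 hb'.2
  linarith [reaction_sub_reaction Λ a' b' a b,
    mul_le_mul_of_nonneg_right hfactor (sub_nonneg.2 haa.le)]

theorem exists_reaction_stable (hΛ : 1 < Λ) :
    ∃ ε > 0, ∃ γ c, 0 ≤ c ∧ c < γ ∧ ∀ a b a' b', a ∈ Icc 0 1 → a' ∈ Icc 0 1 →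
      b' ∈ Icc 0 1 → a' < a →
      (1 - ε ≤ a' ∧ b' ≤ ε) ∨ (a ≤ ε ∧ 1 - ε ≤ b) →
      γ * (a - a') ≤ reaction Λ a b - reaction Λ a' b' + c * max (b' - b) 0 := by
  have hsmall : ∀ᶠ ε in 𝓝[>] (0 : ℝ), ε < 1 ∧
      2 * Λ * ε < 3 * (1 - ε) ^ 2 - 1 ∧ 2 * Λ * ε < Λ * (1 - ε) ^ 2 - 1 := by
    refine Filter.Eventually.filter_mono nhdsWithin_le_nhds (.and ?_ (.and ?_ ?_))
    · exact eventually_lt_nhds (by norm_num)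
    · exact ContinuousAt.eventually_lt (by fun_prop) (by fun_prop) (by norm_num)
    · exact ContinuousAt.eventually_lt (by fun_prop) (by fun_prop) (by norm_num; exact hΛ)
  obtain ⟨ε, ⟨hε₁, hγ₁, hγ₂⟩, hε : 0 < ε⟩ := (hsmall.and self_mem_nhdsWithin).exists
  have hΛ₀ : 0 ≤ Λ := by linarith
  refine ⟨ε, hε, min (3 * (1 - ε) ^ 2 - 1) (Λ * (1 - ε) ^ 2 - 1), 2 * Λ * ε,
    by positivity, lt_min hγ₁ hγ₂, fun a b a' b' ha ha' hb' haa h => ?_⟩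
  have haa₀ : 0 ≤ a - a' := sub_nonneg.2 haa.le
  rcases h with ⟨ha'ε, hb'ε⟩ | ⟨haε, hbε⟩
  · exact (mul_le_mul_of_nonneg_right (min_le_left _ _) haa₀).trans
      (reaction_stable_near_one_zero hΛ₀ hε₁.le ha.2 hb'.1 haa ha'ε hb'ε)
  · exact (mul_le_mul_of_nonneg_right (min_le_right _ _) haa₀).trans
      (reaction_stable_near_zero_one hΛ₀ hε₁.le ha'.1 haa haε hbε hb')

end Reaction

/-! ### Heteroclinic solutions -/

/-- The filter of the end of `E` in direction `e`: convergence along it is convergence as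
`⟪e, x⟫ → +∞`, uniformly in the directions orthogonal to `e`. -/
def atDir (e : E) : Filter E :=
  comap (fun x => ⟪e, x⟫) atTop

section AtDir

variable {e : E} {f : E → ℝ} {L : ℝ}

theorem hasBasis_atDir (e : E) : (atDir e).HasBasis (fun _ => True) fun M => {x | M ≤ ⟪e, x⟫} :=
  atTop_basis.comap _

theorem tendsto_atDir_iff : Tendsto f (atDir e) (𝓝 L) ↔
    ∀ ε, 0 < ε → ∃ M, ∀ x, M ≤ ⟪e, x⟫ → |f x - L| < ε := by
  simp [(hasBasis_atDir e).tendsto_iff nhds_basis_ball, Real.dist_eq]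

theorem tendsto_atDir_neg_iff : Tendsto f (atDir (-e)) (𝓝 L) ↔
    ∀ ε, 0 < ε → ∃ M, ∀ x, ⟪e, x⟫ ≤ M → |f x - L| < ε := by
  rw [tendsto_atDir_iff]
  refine forall₂_congr fun ε _ => neg_surjective.exists.trans ?_
  simp only [inner_neg_left, neg_le_neg_iff]

theorem tendsto_smul_atDir (he : e ≠ 0) : Tendsto (fun s : ℝ => s • e) atTop (atDir e) := by
  refine tendsto_comap_iff.2 ?_
  simpa only [Function.comp_def, real_inner_smul_right, id] using
    tendsto_id.atTop_mul_const (real_inner_self_pos.2 he)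

end AtDir

theorem tendsto_of_tendsto_sub_one {α : Type*} {l : Filter α} {u v : α → ℝ}
    (hu₁ : ∀ x, u x ≤ 1) (hv₀ : ∀ x, 0 ≤ v x) (h : Tendsto (fun x => u x - v x) l (𝓝 1)) :
    Tendsto u l (𝓝 1) ∧ Tendsto v l (𝓝 0) := by
  have hu : Tendsto u l (𝓝 1) :=
    tendsto_of_tendsto_of_tendsto_of_le_of_le h tendsto_const_nhds
      (fun x => sub_le_self _ (hv₀ x)) hu₁
  exact ⟨hu, by simpa using hu.sub h⟩

/-- `(u, v)` is a solution of the system `(P_Λ)` with values in the unit square which connects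
the equilibrium `(0, 1)` to the equilibrium `(1, 0)` along the unit direction `e`, uniformly in
the orthogonal directions. -/
structure IsHeteroclinic (Λ : ℝ) (e : E) (u v : E → ℝ) [FiniteDimensional ℝ E] : Prop where
  norm_eq : ‖e‖ = 1
  contDiff_left : ContDiff ℝ 2 u
  contDiff_right : ContDiff ℝ 2 v
  mem_left : ∀ x, u x ∈ Icc 0 1
  mem_right : ∀ x, v x ∈ Icc 0 1
  laplacian_left : ∀ x, Δ u x = reaction Λ (u x) (v x)
  laplacian_right : ∀ x, Δ v x = reaction Λ (v x) (u x)
  tendsto_left : Tendsto u (atDir e) (𝓝 1)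
  tendsto_right : Tendsto v (atDir e) (𝓝 0)
  tendsto_left_neg : Tendsto u (atDir (-e)) (𝓝 0)
  tendsto_right_neg : Tendsto v (atDir (-e)) (𝓝 1)

section Heteroclinic

variable [FiniteDimensional ℝ E] {Λ : ℝ} {e : E} {u v : E → ℝ}

theorem isHeteroclinic_of_tendsto_sub (hΛ : 0 ≤ Λ) (he : ‖e‖ = 1) (hu : ContDiff ℝ 2 u)
    (hv : ContDiff ℝ 2 v) (hu₀ : ∀ x, 0 ≤ u x) (hv₀ : ∀ x, 0 ≤ v x)
    (hΔu : ∀ x, Δ u x = reaction Λ (u x) (v x)) (hΔv : ∀ x, Δ v x = reaction Λ (v x) (u x))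
    (hpos : Tendsto (fun x => u x - v x) (atDir e) (𝓝 1))
    (hneg : Tendsto (fun x => u x - v x) (atDir (-e)) (𝓝 (-1))) : IsHeteroclinic Λ e u v := by
  have hu₁ : ∀ x, u x ≤ 1 := le_one_of_cube_sub_le_laplacian hu fun x _ =>
    hΔu x ▸ cube_sub_le_reaction hΛ (hu₀ x)
  have hv₁ : ∀ x, v x ≤ 1 := le_one_of_cube_sub_le_laplacian hv fun x _ =>
    hΔv x ▸ cube_sub_le_reaction hΛ (hv₀ x)
  have hneg' : Tendsto (fun x => v x - u x) (atDir (-e)) (𝓝 1) := by simpa using hneg.neg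
  obtain ⟨hu_pos, hv_pos⟩ := tendsto_of_tendsto_sub_one hu₁ hv₀ hpos
  obtain ⟨hv_neg, hu_neg⟩ := tendsto_of_tendsto_sub_one hv₁ hu₀ hneg'
  exact ⟨he, hu, hv, fun x => ⟨hu₀ x, hu₁ x⟩, fun x => ⟨hv₀ x, hv₁ x⟩, hΔu, hΔv,
    hu_pos, hv_pos, hu_neg, hv_neg⟩

namespace IsHeteroclinic

theorem inner_smul_direction (h : IsHeteroclinic Λ e u v) (s : ℝ) : ⟪e, s • e⟫ = s := by
  rw [real_inner_smul_right, real_inner_self_eq_norm_sq, h.norm_eq, one_pow, mul_one]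

theorem direction_ne_zero (h : IsHeteroclinic Λ e u v) : e ≠ 0 :=
  norm_ne_zero_iff.1 (h.norm_eq.trans_ne one_ne_zero)

theorem swap (h : IsHeteroclinic Λ e u v) : IsHeteroclinic Λ (-e) v u where
  norm_eq := (norm_neg e).trans h.norm_eq
  contDiff_left := h.contDiff_right
  contDiff_right := h.contDiff_left
  mem_left := h.mem_right
  mem_right := h.mem_left
  laplacian_left := h.laplacian_right
  laplacian_right := h.laplacian_left
  tendsto_left := h.tendsto_right_neg
  tendsto_right := h.tendsto_left_neg
  tendsto_left_neg := (neg_neg e).symm ▸ h.tendsto_right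
  tendsto_right_neg := (neg_neg e).symm ▸ h.tendsto_left

theorem uniformContinuous_left (hΛ : 0 ≤ Λ) (h : IsHeteroclinic Λ e u v) : UniformContinuous u :=
  have hu : ∀ x, |u x| ≤ 1 := fun x => (abs_of_nonneg (h.mem_left x).1).trans_le (h.mem_left x).2
  have hΔu : ∀ x, |Δ u x| ≤ 1 + Λ := fun x =>
    h.laplacian_left x ▸ abs_reaction_le hΛ (h.mem_left x) (h.mem_right x)
  (lipschitzWith_of_laplacian_bounded h.contDiff_left hu hΔu).uniformContinuous

theorem exists_near_one_zero (h : IsHeteroclinic Λ e u v) {ε : ℝ} (hε : 0 < ε) :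
    ∃ M, ∀ x, M ≤ ⟪e, x⟫ → 1 - ε ≤ u x ∧ v x ≤ ε := by
  have hnear : ∀ᶠ x in atDir e, 1 - ε ≤ u x ∧ v x ≤ ε :=
    (h.tendsto_left.eventually_const_le (sub_lt_self 1 hε)).and
      (h.tendsto_right.eventually_le_const hε)
  simpa using (hasBasis_atDir e).eventually_iff.1 hnear

theorem exists_near_limits (h : IsHeteroclinic Λ e u v) {ε : ℝ} (hε : 0 < ε) :
    ∃ M, (∀ x, M ≤ ⟪e, x⟫ → 1 - ε ≤ u x ∧ v x ≤ ε) ∧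
      ∀ x, ⟪e, x⟫ ≤ -M → u x ≤ ε ∧ 1 - ε ≤ v x := by
  obtain ⟨M₁, hM₁⟩ := h.exists_near_one_zero hε
  obtain ⟨M₂, hM₂⟩ := h.swap.exists_near_one_zero hε
  refine ⟨max M₁ M₂, fun x hx => hM₁ x (le_of_max_le_left hx), fun x hx => (hM₂ x ?_).symm⟩
  rw [inner_neg_left]
  linarith [le_max_right M₁ M₂]

end IsHeteroclinic

end Heteroclinic

/-! ### The sliding method -/

/-- The pair `(u, v)` lies below its translate by `τ` in the competitive order, in which a larger
state has larger `u` and smaller `v`. -/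
def Ordered {X : Type*} [Add X] (u v : X → ℝ) (τ : X) : Prop :=
  ∀ x, u x ≤ u (x + τ) ∧ v (x + τ) ≤ v x

theorem Ordered.swap {X : Type*} [AddGroup X] {u v : X → ℝ} {τ : X} (h : Ordered u v τ) :
    Ordered v u (-τ) := fun x => by
  simpa using (h (x + -τ)).symm

theorem isClosed_setOf_ordered {X : Type*} [TopologicalSpace X] [Add X] [ContinuousAdd X]
    {u v : X → ℝ} (hu : Continuous u) (hv : Continuous v) : IsClosed {τ | Ordered u v τ} := by
  have hinter : {τ | Ordered u v τ} = ⋂ x, {τ | u x ≤ u (x + τ)} ∩ {τ | v (x + τ) ≤ v x} := by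
    ext
    simp [Ordered]
  rw [hinter]
  exact isClosed_iInter fun x =>
    (isClosed_le continuous_const (hu.comp (continuous_const_add x))).inter
      (isClosed_le (hv.comp (continuous_const_add x)) continuous_const)

-- Telescope along `x, x + τ, …, x + n • τ`.
theorem exists_div_le_increment {X : Type*} [AddMonoid X] (f : X → ℝ) (x τ : X) {n : ℕ}
    (hn : n ≠ 0) :
    ∃ i < n, (f (x + n • τ) - f x) / n ≤ f (x + i • τ + τ) - f (x + i • τ) := by
  have hsum : ∑ _i ∈ Finset.range n, (f (x + n • τ) - f x) / n ≤
      ∑ i ∈ Finset.range n, (f (x + i • τ + τ) - f (x + i • τ)) := by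
    have := Finset.sum_range_sub (fun i : ℕ => f (x + i • τ)) n
    simp only [succ_nsmul, ← add_assoc, zero_nsmul, add_zero] at this
    rw [this, Finset.sum_const, Finset.card_range, nsmul_eq_mul, mul_div_cancel₀ _ (by simpa)]
  obtain ⟨i, hi, hle⟩ := Finset.exists_le_of_sum_le (by simpa) hsum
  exact ⟨i, Finset.mem_range.1 hi, hle⟩

theorem closure_setOf_inner_pos {e : E} (he : e ≠ 0) :
    closure {x | 0 < ⟪e, x⟫} = {x | 0 ≤ ⟪e, x⟫} := by
  have he' : innerSL ℝ e ≠ 0 := fun h =>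
    he (inner_self_eq_zero.1 (DFunLike.congr_fun h e : ⟪e, e⟫ = 0))
  have := ((innerSL ℝ e).isOpenMap_of_ne_zero he').preimage_closure_eq_closure_preimage
    (innerSL ℝ e).continuous (Ioi 0)
  rw [closure_Ioi] at this
  exact this.symm

theorem contDiff_comp_add_right {f : E → ℝ} (hf : ContDiff ℝ 2 f) (τ : E) :
    ContDiff ℝ 2 fun x => f (x + τ) :=
  hf.comp (contDiff_id.add contDiff_const)

section Sliding

variable [FiniteDimensional ℝ E] {Λ : ℝ} {e τ : E} {u v f : E → ℝ}

theorem laplacian_comp_add_right_sub (hf : ContDiff ℝ 2 f) (τ x : E) :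
    Δ (fun x => f (x + τ) - f x) x = Δ f (x + τ) - Δ f x := by
  rw [← laplacian_comp_add_right]
  exact (contDiff_comp_add_right hf τ).contDiffAt.laplacian_sub hf.contDiffAt

theorem laplacian_sub_comp_add_right (hf : ContDiff ℝ 2 f) (τ x : E) :
    Δ (fun x => f x - f (x + τ)) x = Δ f x - Δ f (x + τ) := by
  rw [← laplacian_comp_add_right]
  exact hf.contDiffAt.laplacian_sub (contDiff_comp_add_right hf τ).contDiffAt

namespace IsHeteroclinic

/- Outside the slab the smaller of the two states is near `(0, 1)` or the larger one is near
`(1, 0)`, and the reaction is stable there. -/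
theorem exists_ordered_of_slab (hΛ : 1 < Λ) (h : IsHeteroclinic Λ e u v) :
    ∃ M, ∀ τ, (∀ x, -M < ⟪e, x⟫ → ⟪e, x + τ⟫ < M → u x ≤ u (x + τ) ∧ v (x + τ) ≤ v x) →
      Ordered u v τ := by
  obtain ⟨ε, hε, γ, c, hc, hcγ, hstable⟩ := exists_reaction_stable hΛ
  obtain ⟨M, hM_pos, hM_neg⟩ := h.exists_near_limits hε
  refine ⟨M, fun τ hslab => ?_⟩
  have hregion (x : E) (hx : ¬(u x ≤ u (x + τ) ∧ v (x + τ) ≤ v x)) :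
      (1 - ε ≤ u (x + τ) ∧ v (x + τ) ≤ ε) ∨ (u x ≤ ε ∧ 1 - ε ≤ v x) := by
    contrapose! hx
    refine hslab x ?_ ?_
    · exact lt_of_not_ge fun hle => (hx.2 (hM_neg x hle).1).not_ge (hM_neg x hle).2
    · exact lt_of_not_ge fun hle => (hx.1 (hM_pos _ hle).1).not_ge (hM_pos _ hle).2
  have hle := nonpos_of_coupled_laplacian_ge (W := fun x => u x - u (x + τ))
    (Z := fun x => v (x + τ) - v x) (B := 1)
    (h.contDiff_left.sub (contDiff_comp_add_right h.contDiff_left τ))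
    ((contDiff_comp_add_right h.contDiff_right τ).sub h.contDiff_right)
    (fun x => by linarith [(h.mem_left x).2, (h.mem_left (x + τ)).1])
    (fun x => by linarith [(h.mem_right x).1, (h.mem_right (x + τ)).2]) hc hcγ
    (fun x hx => ?_) (fun x hx => ?_)
  · exact fun x => ⟨sub_nonpos.1 (hle x).1, sub_nonpos.1 (hle x).2⟩
  · rw [laplacian_sub_comp_add_right h.contDiff_left, h.laplacian_left, h.laplacian_left]
    exact hstable _ _ _ _ (h.mem_left x) (h.mem_left _) (h.mem_right _) (sub_pos.1 hx)
      (hregion x fun hx' => hx.not_ge (sub_nonpos.2 hx'.1))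
  · rw [laplacian_comp_add_right_sub h.contDiff_right, h.laplacian_right, h.laplacian_right]
    exact hstable _ _ _ _ (h.mem_right _) (h.mem_right x) (h.mem_left x) (sub_pos.1 hx)
      ((hregion x fun hx' => hx.not_ge (sub_nonpos.2 hx'.2)).symm.imp And.symm And.symm)

theorem laplacian_increment_le (hΛ : 0 ≤ Λ) (h : IsHeteroclinic Λ e u v) (hτ : Ordered u v τ)
    (x : E) : Δ (fun x => u (x + τ) - u x) x ≤ (2 + Λ) * (u (x + τ) - u x) := by
  rw [laplacian_comp_add_right_sub h.contDiff_left, h.laplacian_left, h.laplacian_left]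
  exact reaction_sub_reaction_le hΛ (h.mem_left x).1 (hτ x).1 (h.mem_left _).2 (h.mem_right _).1
    (hτ x).2 (h.mem_right x).2

-- The increments along the chain `x - k τ, …, x + k τ` add up to at least `1 / 2`.
theorem exists_dist_le_increment_ge (h : IsHeteroclinic Λ e u v) (heτ : 0 < ⟪e, τ⟫) (R : ℝ) :
    ∃ r, ∃ η > 0, ∀ x, |⟪e, x⟫| ≤ R → ∃ y, dist x y ≤ r ∧ η ≤ u (y + τ) - u y := by
  obtain ⟨M, hM_pos, hM_neg⟩ := h.exists_near_limits (ε := 1 / 4) (by norm_num)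
  obtain ⟨k, hk⟩ := Archimedean.arch (|R| + |M| + 1) heτ
  have hk₀ : k ≠ 0 := by
    rintro rfl
    rw [zero_nsmul] at hk
    linarith [abs_nonneg R, abs_nonneg M]
  rw [nsmul_eq_mul] at hk
  refine ⟨3 * k * ‖τ‖, 1 / 2 / (2 * k : ℕ), by positivity, fun x hx => ?_⟩
  obtain ⟨hRx, hxR⟩ := abs_le.1 hx
  have hinner (m : ℕ) : ⟪e, x - k • τ + m • τ⟫ = ⟪e, x⟫ - k * ⟪e, τ⟫ + m * ⟪e, τ⟫ := by
    simp only [inner_add_right, inner_sub_right, ← Nat.cast_smul_eq_nsmul ℝ, real_inner_smul_right]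
  have htop : 1 - 1 / 4 ≤ u (x - k • τ + (2 * k) • τ) := by
    refine (hM_pos _ ?_).1
    rw [hinner, Nat.cast_mul, Nat.cast_ofNat]
    linarith [le_abs_self M, le_abs_self R]
  have hbot : u (x - k • τ) ≤ 1 / 4 := by
    have := hinner 0
    rw [zero_nsmul, add_zero, Nat.cast_zero, zero_mul, add_zero] at this
    exact (hM_neg _ (by linarith [le_abs_self M, le_abs_self R])).1
  obtain ⟨i, hi, hinc⟩ := exists_div_le_increment u (x - k • τ) τ
    (mul_ne_zero two_ne_zero hk₀ : 2 * k ≠ 0)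
  have hi' : (i : ℝ) ≤ 2 * k := by exact_mod_cast hi.le
  refine ⟨x - k • τ + i • τ, ?_, le_trans (by gcongr; linarith) hinc⟩
  calc dist x (x - k • τ + i • τ) = ‖k • τ - i • τ‖ := by
        rw [dist_eq_norm]
        congr 1
        abel
    _ ≤ k * ‖τ‖ + i * ‖τ‖ := (norm_sub_le _ _).trans (add_le_add norm_nsmul_le norm_nsmul_le)
    _ ≤ 3 * k * ‖τ‖ := by linarith [mul_le_mul_of_nonneg_right hi' (norm_nonneg τ)]

theorem exists_le_increment (hΛ : 0 ≤ Λ) (h : IsHeteroclinic Λ e u v) (heτ : 0 < ⟪e, τ⟫)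
    (hτ : Ordered u v τ) (R : ℝ) : ∃ δ > 0, ∀ x, |⟪e, x⟫| ≤ R → δ ≤ u (x + τ) - u x := by
  obtain ⟨r, η, hη, hlarge⟩ := h.exists_dist_le_increment_ge heτ R
  have hu := h.uniformContinuous_left hΛ
  have huc : UniformContinuous fun x => u (x + τ) - u x :=
    (hu.comp (uniformContinuous_id.add uniformContinuous_const)).sub hu
  obtain ⟨δ, hδ, hspread⟩ := exists_forall_le_of_uniformContinuous
    ((contDiff_comp_add_right h.contDiff_left τ).sub h.contDiff_left)
    (fun x => sub_nonneg.2 (hτ x).1) (by linarith : 0 < 2 + Λ) (h.laplacian_increment_le hΛ hτ)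
    huc hη r
  refine ⟨δ, hδ, fun x hx => ?_⟩
  obtain ⟨y, hxy, hy⟩ := hlarge x hx
  exact hspread x y hxy hy

-- On the slab the order at `τ` is strict by a margin, so it survives a small change of `τ`.
theorem ordered_eventually (hΛ : 1 < Λ) (h : IsHeteroclinic Λ e u v) (heτ : 0 < ⟪e, τ⟫)
    (hτ : Ordered u v τ) : ∀ᶠ σ in 𝓝 τ, Ordered u v σ := by
  have hΛ₀ : 0 ≤ Λ := by linarith
  obtain ⟨M, hslab⟩ := h.exists_ordered_of_slab hΛ
  obtain ⟨δ, hδ, hu_gap⟩ := h.exists_le_increment hΛ₀ heτ hτ M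
  obtain ⟨δ', hδ', hv_gap⟩ := h.swap.exists_le_increment hΛ₀ (by simpa using heτ) hτ.swap
    (M + ⟪e, τ⟫)
  obtain ⟨ρ, hρ, hu_close⟩ := Metric.uniformContinuous_iff.1 (h.uniformContinuous_left hΛ₀) δ hδ
  obtain ⟨ρ', hρ', hv_close⟩ :=
    Metric.uniformContinuous_iff.1 (h.swap.uniformContinuous_left hΛ₀) δ' hδ'
  have hpos : ∀ᶠ σ in 𝓝 τ, 0 < ⟪e, σ⟫ := ContinuousAt.eventually_lt (by fun_prop) (by fun_prop) heτ
  filter_upwards [ball_mem_nhds τ hρ, ball_mem_nhds τ hρ', hpos] with σ hσ hσ' heσ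
  refine hslab σ fun x hx hxσ => ?_
  rw [inner_add_right] at hxσ
  have hu_x := hu_gap x (abs_le.2 ⟨hx.le, by linarith⟩)
  have hv_x := hv_gap (x + τ) (by
    rw [inner_neg_left, abs_neg, inner_add_right, abs_le]
    constructor <;> linarith)
  rw [add_neg_cancel_right] at hv_x
  have hu_σ := hu_close (a := x + σ) (b := x + τ) (by simpa using hσ)
  have hv_σ := hv_close (a := x + σ) (b := x + τ) (by simpa using hσ')
  rw [Real.dist_eq, abs_lt] at hu_σ hv_σ
  constructor <;> linarith

theorem ordered_of_inner_nonneg (hΛ : 1 < Λ) (h : IsHeteroclinic Λ e u v) (heτ : 0 ≤ ⟪e, τ⟫) :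
    Ordered u v τ := by
  have hclosed : IsClosed {σ | Ordered u v σ} :=
    isClosed_setOf_ordered h.contDiff_left.continuous h.contDiff_right.continuous
  have hconn : IsPreconnected {σ | 0 < ⟪e, σ⟫} :=
    ((convex_Ioi 0).is_linear_preimage (innerSL ℝ e).isLinear).isPreconnected
  have hnonempty : ({σ | 0 < ⟪e, σ⟫} ∩ interior {σ | Ordered u v σ}).Nonempty := by
    obtain ⟨M, hslab⟩ := h.exists_ordered_of_slab hΛ
    have hinner : ⟪e, (2 * |M| + 1) • e⟫ = 2 * |M| + 1 := h.inner_smul_direction _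
    have hpos : 0 < ⟪e, (2 * |M| + 1) • e⟫ := by rw [hinner]; positivity
    refine ⟨(2 * |M| + 1) • e, hpos, mem_interior_iff_mem_nhds.2
      (h.ordered_eventually hΛ hpos (hslab _ fun x hx hxσ => ?_))⟩
    rw [inner_add_right, hinner] at hxσ
    linarith [le_abs_self M]
  have hsub : {σ | 0 < ⟪e, σ⟫} ⊆ interior {σ | Ordered u v σ} :=
    hconn.subset_of_closure_inter_subset isOpen_interior hnonempty fun σ ⟨hσ, heσ⟩ =>
      mem_interior_iff_mem_nhds.2 (h.ordered_eventually hΛ heσ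
        (closure_minimal interior_subset hclosed hσ))
  exact closure_minimal (hsub.trans interior_subset) hclosed
    ((closure_setOf_inner_pos h.direction_ne_zero).ge heτ)

theorem le_of_inner_le (hΛ : 1 < Λ) (h : IsHeteroclinic Λ e u v) {x y : E} (hxy : ⟪e, x⟫ ≤ ⟪e, y⟫) :
    u x ≤ u y ∧ v y ≤ v x := by
  have hτ : 0 ≤ ⟪e, y - x⟫ := by rwa [inner_sub_right, sub_nonneg]
  simpa using h.ordered_of_inner_nonneg hΛ hτ x

theorem eq_of_inner_eq (hΛ : 1 < Λ) (h : IsHeteroclinic Λ e u v) {x y : E} (hxy : ⟪e, x⟫ = ⟪e, y⟫) :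
    u x = u y ∧ v x = v y :=
  have hle := h.le_of_inner_le hΛ hxy.le
  have hge := h.le_of_inner_le hΛ hxy.ge
  ⟨hle.1.antisymm hge.1, hge.2.antisymm hle.2⟩

end IsHeteroclinic

end Sliding

/-! ### One-dimensional profiles -/

/-- The restriction of `f` to the line `ℝ e`, along which a function of `⟪e, x⟫` varies. -/
def profile (e : E) (f : E → ℝ) (s : ℝ) : ℝ :=
  f (s • e)

section Profile

variable {e : E} {f u v : E → ℝ} {Λ : ℝ}

theorem contDiff_profile (e : E) (hf : ContDiff ℝ 2 f) : ContDiff ℝ 2 (profile e f) :=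
  hf.comp (contDiff_id.smul contDiff_const)

theorem fderiv_comp_inner {φ : ℝ → ℝ} {x : E} (hφ : DifferentiableAt ℝ φ ⟪e, x⟫) (w : E) :
    fderiv ℝ (fun y => φ ⟪e, y⟫) x w = deriv φ ⟪e, x⟫ * ⟪e, w⟫ := by
  have := hφ.hasDerivAt.comp_hasFDerivAt x (innerSL ℝ e).hasFDerivAt
  exact congrArg (· w) this.fderiv

theorem hasDerivAt_reaction {U V : ℝ → ℝ} {U' V' s : ℝ} (hU : HasDerivAt U U' s)
    (hV : HasDerivAt V V' s) :
    HasDerivAt (fun s => reaction Λ (U s) (V s))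
      ((3 * U s ^ 2 - 1 + Λ * V s ^ 2) * U' + 2 * Λ * U s * V s * V') s :=
  (((hU.fun_pow 3).fun_sub hU).fun_add ((hU.const_mul Λ).fun_mul (hV.fun_pow 2))).congr_deriv
    (by norm_num; ring)

namespace IsHeteroclinic

variable [FiniteDimensional ℝ E]

theorem profile_inner (hΛ : 1 < Λ) (h : IsHeteroclinic Λ e u v) (x : E) :
    u x = profile e u ⟪e, x⟫ ∧ v x = profile e v ⟪e, x⟫ :=
  h.eq_of_inner_eq hΛ (h.inner_smul_direction _).symm

theorem monotone_profile (hΛ : 1 < Λ) (h : IsHeteroclinic Λ e u v) :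
    Monotone (profile e u) ∧ Antitone (profile e v) := by
  have hinner {s t : ℝ} (hst : s ≤ t) : ⟪e, s • e⟫ ≤ ⟪e, t • e⟫ := by
    rwa [h.inner_smul_direction, h.inner_smul_direction]
  exact ⟨fun s t hst => (h.le_of_inner_le hΛ (hinner hst)).1,
    fun s t hst => (h.le_of_inner_le hΛ (hinner hst)).2⟩

theorem deriv_deriv_profile (hΛ : 1 < Λ) (h : IsHeteroclinic Λ e u v) :
    deriv (deriv (profile e u)) = fun s => reaction Λ (profile e u s) (profile e v s) := by
  funext s
  have hΔ := laplacian_comp_inner (e := e) (x := s • e)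
    (contDiff_profile e h.contDiff_left).contDiffAt
  rwa [← funext fun x => (h.profile_inner hΛ x).1, h.laplacian_left, h.norm_eq, one_pow, one_mul,
    h.inner_smul_direction, eq_comm] at hΔ

theorem contDiff_deriv_profile (hΛ : 1 < Λ) (h : IsHeteroclinic Λ e u v) :
    ContDiff ℝ 2 (deriv (profile e u)) := by
  have hU := contDiff_profile e h.contDiff_left
  have hV := contDiff_profile e h.contDiff_right
  have hU' : ContDiff ℝ 1 (deriv (profile e u)) := hU.deriv'
  refine contDiff_succ_iff_deriv (n := 1).2 ⟨hU'.differentiable one_ne_zero, by simp, ?_⟩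
  rw [h.deriv_deriv_profile hΛ]
  have hU₁ : ContDiff ℝ 1 (profile e u) := hU.of_le one_le_two
  have hV₁ : ContDiff ℝ 1 (profile e v) := hV.of_le one_le_two
  exact ((hU₁.pow 3).sub hU₁).add ((contDiff_const.mul hU₁).mul (hV₁.pow 2))

theorem laplacian_deriv_profile_le (hΛ : 1 < Λ) (h : IsHeteroclinic Λ e u v) (s : ℝ) :
    Δ (deriv (profile e u)) s ≤ (2 + Λ) * deriv (profile e u) s := by
  have hU := (contDiff_profile e h.contDiff_left).differentiable two_ne_zero s
  have hV := (contDiff_profile e h.contDiff_right).differentiable two_ne_zero s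
  have hU' := (h.monotone_profile hΛ).1.deriv_nonneg (x := s)
  have hV' := (h.monotone_profile hΛ).2.deriv_nonpos (x := s)
  obtain ⟨hU₀, hU₁⟩ : profile e u s ∈ Icc 0 1 := h.mem_left (s • e)
  obtain ⟨hV₀, hV₁⟩ : profile e v s ∈ Icc 0 1 := h.mem_right (s • e)
  rw [laplacian_eq_iteratedDeriv_real, iteratedDeriv_succ, iteratedDeriv_one,
    h.deriv_deriv_profile hΛ, (hasDerivAt_reaction hU.hasDerivAt hV.hasDerivAt).deriv]
  have hfactor : 3 * profile e u s ^ 2 - 1 + Λ * profile e v s ^ 2 ≤ 2 + Λ := by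
    have : Λ * profile e v s ^ 2 ≤ Λ := mul_le_of_le_one_right (by linarith) (pow_le_one₀ hV₀ hV₁)
    linarith [pow_le_one₀ (n := 2) hU₀ hU₁]
  have hcoupling : 2 * Λ * profile e u s * profile e v s * deriv (profile e v) s ≤ 0 :=
    mul_nonpos_of_nonneg_of_nonpos
      (mul_nonneg (mul_nonneg (by linarith) hU₀) hV₀) hV'
  linarith [mul_le_mul_of_nonneg_right hfactor hU']

theorem deriv_profile_pos (hΛ : 1 < Λ) (h : IsHeteroclinic Λ e u v) (s : ℝ) :
    0 < deriv (profile e u) s := by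
  have hnonneg (t : ℝ) : 0 ≤ deriv (profile e u) t := (h.monotone_profile hΛ).1.deriv_nonneg
  suffices ∃ t, 0 < deriv (profile e u) t by
    obtain ⟨t, ht⟩ := this
    exact pos_of_laplacian_le (h.contDiff_deriv_profile hΛ) hnonneg (by linarith)
      (h.laplacian_deriv_profile_le hΛ) ht s
  by_contra! hzero
  have hconst (a b : ℝ) : profile e u a = profile e u b :=
    is_const_of_deriv_eq_zero
      ((contDiff_profile e h.contDiff_left).differentiable two_ne_zero)
      (fun t => (hzero t).antisymm (hnonneg t)) a b
  have htop : Tendsto (profile e u) atTop (𝓝 1) :=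
    h.tendsto_left.comp (tendsto_smul_atDir h.direction_ne_zero)
  have hbot : Tendsto (fun s => profile e u (-s)) atTop (𝓝 0) := by
    have := h.tendsto_left_neg.comp (tendsto_smul_atDir (neg_ne_zero.2 h.direction_ne_zero))
    simpa only [Function.comp_def, smul_neg, ← neg_smul, profile] using this
  exact one_ne_zero (tendsto_nhds_unique htop (hbot.congr fun s => hconst _ _))

theorem fderiv_pos (hΛ : 1 < Λ) (h : IsHeteroclinic Λ e u v) (x : E) : 0 < fderiv ℝ u x e := by
  have hU := (contDiff_profile e h.contDiff_left).differentiable two_ne_zero ⟪e, x⟫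
  rw [funext fun y => (h.profile_inner hΛ y).1, fderiv_comp_inner hU, real_inner_self_eq_norm_sq,
    h.norm_eq, one_pow, mul_one]
  exact h.deriv_profile_pos hΛ _

theorem fderiv_neg (hΛ : 1 < Λ) (h : IsHeteroclinic Λ e u v) (x : E) : fderiv ℝ v x e < 0 := by
  simpa using h.swap.fderiv_pos hΛ x

end IsHeteroclinic

end Profile

/-! ### The system in Euclidean coordinates -/

theorem IsSolution.laplacian_eq {N : ℕ} {Λ : ℝ} {u v : EuclideanSpace ℝ (Fin N) → ℝ}
    (h : IsSolution N Λ u v) (x : EuclideanSpace ℝ (Fin N)) :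
    Δ u x = reaction Λ (u x) (v x) ∧ Δ v x = reaction Λ (v x) (u x) := by
  obtain ⟨hu, hv, hΔu, hΔv⟩ := h
  rw [← lap_eq_laplacian hu, ← lap_eq_laplacian hv, reaction, reaction]
  exact ⟨by linarith only [hΔu x], by linarith only [hΔv x]⟩

theorem inner_single_one {ι : Type*} [Fintype ι] [DecidableEq ι] (i : ι)
    (x : EuclideanSpace ℝ ι) : ⟪EuclideanSpace.single i (1 : ℝ), x⟫ = x i := by
  simp [EuclideanSpace.inner_single_left]

theorem IsHeteroclinic.hinf {N : ℕ} {Λ : ℝ} {u v : EuclideanSpace ℝ (Fin (N + 1)) → ℝ}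
    (h : IsHeteroclinic Λ (EuclideanSpace.single (Fin.last N) 1) u v) : Hinf N u v := by
  have hpos := tendsto_atDir_iff.1 h.tendsto_left
  have hpos' := tendsto_atDir_iff.1 h.tendsto_right
  have hneg := tendsto_atDir_neg_iff.1 h.tendsto_left_neg
  have hneg' := tendsto_atDir_neg_iff.1 h.tendsto_right_neg
  simp only [inner_single_one, sub_zero] at hpos hpos' hneg hneg'
  refine ⟨fun ε hε => ?_, fun ε hε => ?_⟩
  · obtain ⟨M₁, hM₁⟩ := hpos ε hε
    obtain ⟨M₂, hM₂⟩ := hpos' ε hε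
    exact ⟨max M₁ M₂, fun x hx => ⟨hM₁ x (le_of_max_le_left hx), hM₂ x (le_of_max_le_right hx)⟩⟩
  · obtain ⟨M₁, hM₁⟩ := hneg ε hε
    obtain ⟨M₂, hM₂⟩ := hneg' ε hε
    exact ⟨min M₁ M₂, fun x hx => ⟨hM₁ x (le_min_iff.1 hx).1, hM₂ x (le_min_iff.1 hx).2⟩⟩

/-- Corollary 1.5: the weaker assumption `u - v → ±1` uniformly as
`x_N → ±∞` still yields `(h∞)`, one-dimensional symmetry and monotonicity. -/
theorem stmt_5 (N : ℕ) (Λ : ℝ) (hΛ : 1 < Λ)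
    (u v : EuclideanSpace ℝ (Fin (N + 1)) → ℝ)
    (hsol : IsSolution (N + 1) Λ u v)
    (hu : ∀ x, 0 ≤ u x) (hv : ∀ x, 0 ≤ v x)
    (hlimPlus : ∀ ε : ℝ, 0 < ε → ∃ M : ℝ, ∀ x : EuclideanSpace ℝ (Fin (N + 1)),
      M ≤ x (Fin.last N) → |u x - v x - 1| < ε)
    (hlimMinus : ∀ ε : ℝ, 0 < ε → ∃ M : ℝ, ∀ x : EuclideanSpace ℝ (Fin (N + 1)),
      x (Fin.last N) ≤ M → |u x - v x - (-1)| < ε) :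
    Hinf N u v ∧
    (∀ x y : EuclideanSpace ℝ (Fin (N + 1)),
      x (Fin.last N) = y (Fin.last N) → u x = u y ∧ v x = v y) ∧
    (∀ x : EuclideanSpace ℝ (Fin (N + 1)),
      0 < fderiv ℝ u x (EuclideanSpace.single (Fin.last N) 1) ∧
      fderiv ℝ v x (EuclideanSpace.single (Fin.last N) 1) < 0) := by
  set e : EuclideanSpace ℝ (Fin (N + 1)) := EuclideanSpace.single (Fin.last N) 1 with he
  have hinner (x) : ⟪e, x⟫ = x (Fin.last N) := inner_single_one _ x
  have hpos : Tendsto (fun x => u x - v x) (atDir e) (𝓝 1) :=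
    tendsto_atDir_iff.2 (by simpa only [hinner] using hlimPlus)
  have hneg : Tendsto (fun x => u x - v x) (atDir (-e)) (𝓝 (-1)) :=
    tendsto_atDir_neg_iff.2 (by simpa only [hinner] using hlimMinus)
  have h : IsHeteroclinic Λ e u v :=
    isHeteroclinic_of_tendsto_sub (by linarith) (by simp [he]) hsol.1 hsol.2.1 hu hv
      (fun x => (hsol.laplacian_eq x).1) (fun x => (hsol.laplacian_eq x).2) hpos hneg
  have hsymm (x y) (hxy : x (Fin.last N) = y (Fin.last N)) : u x = u y ∧ v x = v y :=
    h.eq_of_inner_eq hΛ (by rw [hinner, hinner, hxy])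
  exact ⟨h.hinf, hsymm, fun x => ⟨h.fderiv_pos hΛ x, h.fderiv_neg hΛ x⟩⟩
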